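/- Let φ : R → R be a contracting endomorphism of a local ring (R, m, k) whose induced endomorphism of the residue field k is separable, and such that R/φ(m)R is Artinian. Then there exists a commutative square consisting of a weakly étale local homomorphism β̃ : (R, m, k) → (S, mS, K) with S complete and k → K separable, and a module-finite contracting endomorphism ψ : S → S satisfying ψ ∘ β̃ = β̃ ∘ φ. -/

import Mathlib

open IsLocalRing

/-- A local homomorphism of local rings is *weakly étale* if it is flat and its closed fibre
is a field, i.e. the maximal ideal of the source extends to the maximal ideal of the target. -/
def RingHom.WeaklyEtale {R S : Type u} [CommRing R] [CommRing S]
    [IsLocalRing R] [IsLocalRing S] (f : R →+* S) : Prop :=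
  (letI : Algebra R S := f.toAlgebra; Module.Flat R S) ∧ IsLocalHom f ∧
    Ideal.map f (maximalIdeal R) = maximalIdeal S

/-- A field homomorphism `β : k → K` is *separable* if every intermediate field that is
finitely generated over `k` is separably generated over `k`. -/
def RingHom.IsSeparableFieldHom {k K : Type u} [Field k] [Field K] (β : k →+* K) : Prop :=
  letI : Algebra k K := β.toAlgebra
  ∀ F : IntermediateField k K, F.FG →
    ∃ s : Set F, AlgebraicIndependent k ((↑) : s → F) ∧
      Algebra.IsSeparable (↥(IntermediateField.adjoin k (s : Set (↥F)))) (↥F)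

/-- The data of a commutative square as in Proposition A.4: a weakly étale local map
`β̃ : (R,m,k) → (S,mS,K)` with `S` complete and `k → K` separable, together with a
module-finite contracting endomorphism `ψ` of `S` satisfying `ψ ∘ β̃ = β̃ ∘ φ`. -/
structure CowsCompletion (R : Type u) [CommRing R] [IsNoetherianRing R] [IsLocalRing R]
    (φ : R →+* R) where
  S : Type u
  [commRingS : CommRing S]
  [noethS : IsNoetherianRing S]
  [localS : IsLocalRing S]
  β : R →+* S
  ψ : S →+* S
  [localβ : IsLocalHom β]
  weaklyEtale : β.WeaklyEtale
  complete : IsAdicComplete (maximalIdeal S) S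
  residueSeparable : (ResidueField.map β).IsSeparableFieldHom
  square_comm : ψ.comp β = β.comp φ
  moduleFinite : ψ.Finite
  contracting : ∃ N : ℕ, ∀ n : ℕ, N ≤ n → ∀ x ∈ maximalIdeal S,
    (ψ ^ n) x ∈ (maximalIdeal S) ^ 2

/-
Contraction makes the ideals `φʲ(m)A` of the completion `A` of `R` cofinal with the powers of `mA`,
and each surjection `A ⧸ φʲ⁺¹(m)A → A ⧸ φʲ(m)A` has nilpotent kernel. Since the separable map
`σ : k → k` is formally smooth, `k` lifts step by step along this tower to a coefficient field of
`A` stable under `φ`. Let `K` be the colimit of `k` along `σ`, on which the induced `τ` is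
bijective. The completion of `K ⊗[k] A` is flat over `R` with residue field `K`, and carries an
endomorphism extending both `φ` and `τ`; as `τ` is surjective and `φ(m)R` contains a power of `m`,
it is finite by the complete form of Nakayama's lemma.
-/

section SeparableFieldHom

/-- A family `c` is Frobenius independent if it is linearly independent over the subring of `p`-th
powers; the coefficients are written as `p`-th powers to avoid mentioning that subring. -/
def FrobeniusIndependent {k ι : Type*} [CommRing k] [Fintype ι] (p : ℕ) (c : ι → k) : Prop :=
  ∀ y : ι → k, ∑ i, y i ^ p * c i = 0 → y = 0

/-- MacLane's criterion for separability of a field homomorphism `k → K`: if `k` has prime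
characteristic `p`, then `k` and `K ^ p` are linearly disjoint over `k ^ p`. -/
def IsMacLane {k K : Type*} [Field k] [Field K] (f : k →+* K) : Prop :=
  ∀ p : ℕ, p.Prime → CharP k p → ∀ (n : ℕ) (c : Fin n → k),
    FrobeniusIndependent p c → FrobeniusIndependent p (f ∘ c)

lemma FrobeniusIndependent.of_map {k K ι : Type*} [CommRing k] [CommRing K] [Fintype ι] {p : ℕ}
    {c : ι → k} {f : k →+* K} (hf : Function.Injective f) (h : FrobeniusIndependent p (f ∘ c)) :
    FrobeniusIndependent p c := fun y hy => by
  have hfy : f ∘ y = 0 := h (f ∘ y) (by simpa using congrArg f hy)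
  exact funext fun i => hf (by simpa using congrFun hfy i)

lemma FrobeniusIndependent.of_linearIndependent {k ι : Type*} [Field k] [Fintype ι] {p : ℕ}
    [Fact p.Prime] [CharP k p] {c : ι → k}
    (hc : LinearIndependent (frobenius k p).fieldRange c) : FrobeniusIndependent p c := by
  intro y hy
  have hzero := Fintype.linearIndependent_iff.mp hc (fun i => ⟨y i ^ p, y i, rfl⟩)
    (by simpa [Subfield.smul_def] using hy)
  exact funext fun i => pow_eq_zero_iff (NeZero.ne p) |>.mp (congrArg Subtype.val (hzero i))

lemma exists_linearIndependent_expansion (F : Type*) {V ι : Type*} [Field F] [AddCommGroup V]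
    [Module F V] [Finite ι] (x : ι → V) :
    ∃ (n : ℕ) (b : Fin n → V) (a : ι → Fin n → F),
      LinearIndependent F b ∧ ∀ i, x i = ∑ j, a i j • b j := by
  let W := Submodule.span F (Set.range x)
  have : FiniteDimensional F W := FiniteDimensional.span_of_finite F (Set.finite_range x)
  let b := Module.finBasis F W
  let xW : ι → W := fun i => ⟨x i, Submodule.subset_span ⟨i, rfl⟩⟩
  refine ⟨_, W.subtype ∘ b, fun i => b.repr (xW i),
    b.linearIndependent.map' W.subtype W.ker_subtype, fun i => ?_⟩
  have hx := congrArg W.subtype (b.sum_repr (xW i))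
  rw [map_sum] at hx
  exact hx.symm

lemma exists_frobeniusIndependent_expansion {k ι : Type*} [Field k] [Finite ι] (p : ℕ)
    [Fact p.Prime] [CharP k p] (c : ι → k) :
    ∃ (n : ℕ) (b : Fin n → k) (y : ι → Fin n → k),
      FrobeniusIndependent p b ∧ ∀ i, c i = ∑ j, y i j ^ p * b j := by
  obtain ⟨n, b, a, hb, hc⟩ := exists_linearIndependent_expansion (frobenius k p).fieldRange c
  choose y hy using fun i j => (a i j).2
  refine ⟨n, b, y, FrobeniusIndependent.of_linearIndependent hb, fun i => (hc i).trans ?_⟩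
  exact Finset.sum_congr rfl fun j _ => congrArg (· * b j) (hy i j).symm

lemma sum_pow_mul_expand {K ι κ : Type*} [CommRing K] [Fintype ι] [Fintype κ] (p : ℕ)
    [Fact p.Prime] [CharP K p] (a : ι → κ → K) (b : κ → K) (c : ι → K) :
    ∑ i, (∑ j, a i j * b j) ^ p * c i = ∑ j, (∑ i, a i j ^ p * c i) * b j ^ p := by
  simp_rw [sum_pow_char, Finset.sum_mul, mul_pow]
  rw [Finset.sum_comm]
  exact Finset.sum_congr rfl fun j _ => Finset.sum_congr rfl fun i _ => mul_right_comm ..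

namespace IsMacLane

variable {k K L : Type*} [Field k] [Field K] [Field L]

lemma comp {f : k →+* K} {g : K →+* L} (hf : IsMacLane f) (hg : IsMacLane g) :
    IsMacLane (g.comp f) := fun p hp _ n c hc =>
  hg p hp (charP_of_injective_ringHom f.injective p) n (f ∘ c) (hf p hp inferInstance n c hc)

lemma of_comp {f : k →+* K} {g : K →+* L} (h : IsMacLane (g.comp f)) : IsMacLane f :=
  fun p hp hk n c hc => .of_map g.injective (h p hp hk n c hc)

lemma id : IsMacLane (RingHom.id k) := fun _ _ _ _ _ hc => hc

lemma pow {σ : k →+* k} (h : IsMacLane σ) (n : ℕ) : IsMacLane (σ ^ n) := by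
  induction n with
  | zero => exact IsMacLane.id
  | succ n ih => exact h.comp ih

variable [Algebra k K]

lemma of_linearIndependent_pow
    (H : ∀ p : ℕ, p.Prime → CharP k p → ∀ (m : ℕ) (v : Fin m → K), LinearIndependent k v →
      LinearIndependent k (fun i => v i ^ p)) : IsMacLane (algebraMap k K) := by
  intro p hp hk n c hc x hx
  have : CharP K p := charP_of_injective_algebraMap (algebraMap k K).injective p
  have := Fact.mk hp
  obtain ⟨m, b, a, hb, hxb⟩ := exists_linearIndependent_expansion k x
  have hrel : ∑ j, (∑ i, a i j ^ p * c i) • b j ^ p = 0 := by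
    rw [← hx]
    simp only [hxb, Algebra.smul_def, sum_pow_mul_expand, map_sum, map_mul, map_pow,
      Function.comp_apply]
  have ha : ∀ j, (a · j) = 0 := fun j =>
    hc _ (Fintype.linearIndependent_iff.mp (H p hp hk m b hb) _ hrel j)
  exact funext fun i => by simp [hxb, fun j => congrFun (ha j) i]

lemma linearIndependent_pow (H : IsMacLane (algebraMap k K)) {p : ℕ} (hp : p.Prime) [CharP k p]
    {m : ℕ} {v : Fin m → K} (hv : LinearIndependent k v) :
    LinearIndependent k (fun i => v i ^ p) := by
  have : CharP K p := charP_of_injective_algebraMap (algebraMap k K).injective p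
  have := Fact.mk hp
  rw [Fintype.linearIndependent_iff]
  intro c hc
  obtain ⟨n, b, y, hb, hcb⟩ := exists_frobeniusIndependent_expansion p c
  have hrel : ∑ j, (∑ i, algebraMap k K (y i j) * v i) ^ p * algebraMap k K (b j) = 0 := by
    rw [← hc]
    simp only [hcb, Algebra.smul_def, sum_pow_mul_expand, map_sum, map_mul, map_pow]
  have hyv : ∀ j, ∑ i, y i j • v i = 0 := fun j => by
    simpa only [Algebra.smul_def, Pi.zero_apply] using
      congrFun (H p hp inferInstance n b hb _ hrel) j
  have hy : ∀ i j, y i j = 0 := fun i j =>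
    Fintype.linearIndependent_iff.mp hv (y · j) (hyv j) i
  exact fun i => by simp [hcb, hy, hp.ne_zero]

lemma of_isSeparable [Algebra.IsSeparable k K] : IsMacLane (algebraMap k K) :=
  of_linearIndependent_pow fun p hp _ _ _ hv => by
    have : ExpChar k p := .prime hp
    simpa only [pow_one] using hv.map_pow_expChar_pow_of_isSeparable p 1

end IsMacLane

lemma FrobeniusIndependent.mvPolynomial_C {k ι σ : Type*} [CommRing k] [Fintype ι] {p : ℕ}
    [Fact p.Prime] [CharP k p] {c : ι → k} (hc : FrobeniusIndependent p c) :
    FrobeniusIndependent p (MvPolynomial.C (σ := σ) ∘ c) := by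
  intro x hx
  ext i d
  refine congrFun (hc (fun i => (x i).coeff d) ?_) i
  have hcoeff := congrArg (MvPolynomial.coeff (p • d)) hx
  rw [MvPolynomial.coeff_sum, MvPolynomial.coeff_zero] at hcoeff
  rw [← hcoeff]
  refine Finset.sum_congr rfl fun i _ => ?_
  rw [Function.comp_apply, mul_comm (x i ^ p), MvPolynomial.coeff_C_mul,
    ← MvPolynomial.map_frobenius_expand, MvPolynomial.coeff_map,
    MvPolynomial.coeff_expand_smul _ (NeZero.ne p), frobenius_def, mul_comm]

lemma FrobeniusIndependent.algebraMap_fractionRing {B L ι : Type*} [CommRing B] [Field L]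
    [Algebra B L] [IsFractionRing B L] [Fintype ι] {p : ℕ} {c : ι → B}
    (hc : FrobeniusIndependent p c) : FrobeniusIndependent p (algebraMap B L ∘ c) := by
  intro x hx
  obtain ⟨d, hd⟩ := IsLocalization.exist_integer_multiples_of_finite (nonZeroDivisors B) x
  choose z hz using hd
  have hz0 : z = 0 := hc z <| IsFractionRing.injective B L <| calc
    algebraMap B L (∑ i, z i ^ p * c i)
      = algebraMap B L d ^ p * ∑ i, x i ^ p * (algebraMap B L ∘ c) i := by
        simp only [map_sum, map_mul, map_pow, hz, Algebra.smul_def, mul_pow, Finset.mul_sum,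
          mul_assoc, Function.comp_apply]
    _ = algebraMap B L 0 := by rw [hx, mul_zero, map_zero]
  ext i
  have hdx := hz i
  rw [hz0, Pi.zero_apply, map_zero, Algebra.smul_def] at hdx
  exact (mul_eq_zero.mp hdx.symm).resolve_left (IsLocalization.map_units L d).ne_zero

namespace IsMacLane

lemma of_isFractionRing_mvPolynomial {k B L σ : Type*} [Field k] [CommRing B] [Field L]
    [Algebra k B] [Algebra k L] [Algebra B L] [IsScalarTower k B L] [IsFractionRing B L]
    (e : MvPolynomial σ k ≃ₐ[k] B) : IsMacLane (algebraMap k L) := by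
  intro p hp _ n c hc
  have := Fact.mk hp
  have hB : FrobeniusIndependent p (algebraMap k B ∘ c) := by
    refine .of_map (f := (e.symm : B →+* MvPolynomial σ k)) e.symm.injective ?_
    convert hc.mvPolynomial_C
    ext1 i
    exact e.symm.commutes (c i)
  rw [IsScalarTower.algebraMap_eq k B L, RingHom.coe_comp, Function.comp_assoc]
  exact hB.algebraMap_fractionRing

open scoped IntermediateField.algebraAdjoinAdjoin in
lemma of_algebraicIndependent {k F : Type*} [Field k] [Field F] [Algebra k F] {s : Set F}
    (hs : AlgebraicIndependent k ((↑) : s → F)) :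
    IsMacLane (algebraMap k (IntermediateField.adjoin k s)) := by
  have e := hs.aevalEquiv
  rw [Subtype.range_coe] at e
  exact of_isFractionRing_mvPolynomial (B := Algebra.adjoin k s) e

variable {k K : Type u} [Field k] [Field K] {β : k →+* K}

lemma of_isSeparableFieldHom (h : β.IsSeparableFieldHom) : IsMacLane β := by
  let : Algebra k K := β.toAlgebra
  intro p hp hk n c hc x hx
  let F := IntermediateField.adjoin k (Set.range x)
  obtain ⟨s, hs, _⟩ := h F (IntermediateField.fg_adjoin_of_finite (Set.finite_range x))
  have hF : IsMacLane (algebraMap k F) :=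
    (of_algebraicIndependent hs).comp (of_isSeparable (k := IntermediateField.adjoin k s))
  let xF : Fin n → F := fun i => ⟨x i, IntermediateField.subset_adjoin _ _ ⟨i, rfl⟩⟩
  have hxF : xF = 0 := hF p hp hk n c hc xF <| F.val.injective <| by
    exact (map_sum F.val _ _).trans hx
  exact funext fun i => congrArg Subtype.val (congrFun hxF i)

lemma isSeparableFieldHom (h : IsMacLane β) : β.IsSeparableFieldHom := by
  let : Algebra k K := β.toAlgebra
  intro F hF
  have : Algebra.EssFiniteType k F := IntermediateField.essFiniteType_iff.mpr hF
  obtain hz | ⟨p, ⟨hp⟩, hk⟩ := CharP.exists' k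
  · obtain ⟨s, hs, hsep⟩ := exists_isTranscendenceBasis_and_isSeparable_of_perfectField k F
    exact ⟨s, hs.1, hsep⟩
  · have : ExpChar k p := .prime hp
    have hkF : IsMacLane (algebraMap k F) := of_comp (g := algebraMap F K) h
    obtain ⟨s, hs, hsep⟩ :=
      exists_isTranscendenceBasis_and_isSeparable_of_linearIndepOn_pow_of_essFiniteType
        (k := k) (K := F) p hp fun t ht => (linearIndependent_equiv t.equivFin.symm).mp
          (hkF.linearIndependent_pow hp ((linearIndependent_equiv t.equivFin.symm).mpr ht))
    exact ⟨s, hs.1, hsep⟩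

end IsMacLane

end SeparableFieldHom

section FormallySmooth

lemma subsingleton_h1Cotangent_iff_pderiv {R S ι : Type*} [CommRing R] [CommRing S] [Algebra R S]
    (P : Algebra.Generators R S ι) :
    Subsingleton (Algebra.H1Cotangent R S) ↔ ∀ x ∈ P.ker,
      (∀ i, MvPolynomial.aeval P.val (MvPolynomial.pderiv i x) = 0) → x ∈ P.ker ^ 2 := by
  have : Algebra.FormallySmooth R P.toExtension.Ring :=
    inferInstanceAs (Algebra.FormallySmooth R (MvPolynomial ι R))
  rw [← Algebra.Extension.cotangentComplex_injective_iff P.toExtension, injective_iff_map_eq_zero,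
    Algebra.Extension.Cotangent.mk_surjective.forall, Subtype.forall]
  refine forall₂_congr fun x hx => imp_congr ?_ (Algebra.Extension.Cotangent.mk_eq_zero_iff _)
  rw [← P.cotangentSpaceBasis.repr.map_eq_zero_iff, Finsupp.ext_iff]
  exact forall_congr' fun i =>
    Eq.congr_left (Algebra.Generators.cotangentSpaceBasis_repr_one_tmul P x i)

/-- A polynomial involves only finitely many variables, so the vanishing of the first cotangent
homology of `K` over `k` can be tested on finitely generated intermediate fields. -/
lemma formallySmooth_of_forall_fg {k K : Type*} [Field k] [Field K] [Algebra k K]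
    (H : ∀ F : IntermediateField k K, F.FG → Algebra.FormallySmooth k F) :
    Algebra.FormallySmooth k K := by
  refine ⟨inferInstance, (subsingleton_h1Cotangent_iff_pderiv (.self k K)).mpr fun x hx hd => ?_⟩
  let F := IntermediateField.adjoin k (x.vars : Set K)
  have : Algebra.FormallySmooth k F := H F ⟨x.vars, rfl⟩
  let r : MvPolynomial F k →ₐ[k] MvPolynomial K k := MvPolynomial.rename ((↑) : F → K)
  obtain ⟨q, hq⟩ := MvPolynomial.exists_rename_eq_of_vars_subset_range x ((↑) : F → K)
    Subtype.val_injective (Subtype.range_coe.symm ▸ IntermediateField.subset_adjoin _ _)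
  have hr : ∀ q, MvPolynomial.aeval (id : K → K) (r q) =
      F.val (MvPolynomial.aeval (id : F → F) q) := fun q => by
    rw [MvPolynomial.aeval_rename, MvPolynomial.comp_aeval_apply]
    rfl
  have hker : ∀ q, q ∈ (Algebra.Generators.self k F).ker ↔
      r q ∈ (Algebra.Generators.self k K).ker := fun q => by
    rw [Algebra.Generators.ker_eq_ker_aeval_val, Algebra.Generators.ker_eq_ker_aeval_val]
    exact (map_eq_zero_iff F.val F.val.injective).symm.trans (Eq.congr_left (hr q).symm)
  have hqker : q ∈ (Algebra.Generators.self k F).ker ^ 2 := by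
    refine (subsingleton_h1Cotangent_iff_pderiv (.self k F)).mp inferInstance q
      ((hker q).mpr (hq ▸ hx)) fun a => F.val.injective ?_
    refine (hr _).symm.trans ?_
    rw [← MvPolynomial.pderiv_rename Subtype.val_injective, hq]
    exact (hd a).trans F.val.map_zero.symm
  have hmap : (Algebra.Generators.self k F).ker.map r ≤ (Algebra.Generators.self k K).ker :=
    Ideal.map_le_iff_le_comap.mpr fun q => (hker q).mp
  rw [← hq]
  exact Ideal.pow_right_mono hmap 2 (Ideal.map_pow r _ 2 ▸ Ideal.mem_map_of_mem r hqker)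

lemma formallySmooth_of_isSeparableFieldHom {k K : Type u} [Field k] [Field K] {β : k →+* K}
    (h : β.IsSeparableFieldHom) : β.FormallySmooth := by
  let : Algebra k K := β.toAlgebra
  refine formallySmooth_of_forall_fg fun F hF => ?_
  obtain ⟨s, hs, hsep⟩ := h F hF
  rw [← Subtype.range_coe (s := s)] at hsep
  exact .of_algebraicIndependent_of_isSeparable hs

end FormallySmooth

section Perfection

lemma pow_comp_of_comp_eq {A B : Type*} [CommRing A] [CommRing B] {φ : A →+* A} {ψ : B →+* B}
    {f : A →+* B} (h : ψ.comp f = f.comp φ) (n : ℕ) : (ψ ^ n).comp f = f.comp (φ ^ n) := by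
  have hsemi : Function.Semiconj f φ ψ := fun x => (RingHom.congr_fun h x).symm
  ext x
  simp only [RingHom.comp_apply, RingHom.coe_pow, (hsemi.iterate_right n).eq x]

/-- `ι : k → K` and `τ : K → K` exhibit `K` as the colimit of `k → k → k → ⋯` along `σ`, and `τ` as
the automorphism induced by `σ`. When `σ` is the Frobenius, `K` is the perfect closure of `k`. -/
structure IsPerfection {k K : Type*} [CommRing k] [CommRing K] (σ : k →+* k) (ι : k →+* K)
    (τ : K →+* K) : Prop where
  bijective : Function.Bijective τ
  comp_eq : τ.comp ι = ι.comp σ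
  exists_pow_mem_range (x : K) : ∃ n, (τ ^ n) x ∈ Set.range ι

lemma exists_isPerfection {k : Type u} [Field k] (σ : k →+* k) :
    ∃ (K : Type u) (_ : Field K) (ι : k →+* K) (τ : K →+* K), IsPerfection σ ι τ := by
  let f : ∀ i j : ℕ, i ≤ j → k →+* k := fun i j _ => σ ^ (j - i)
  have : DirectedSystem (fun _ : ℕ => k) (f · · ·) :=
    { map_self := fun _ x => by
        simp only [f, Nat.sub_self, pow_zero, RingHom.one_def, RingHom.id_apply]
      map_map := fun _ _ _ hij hjl x => by
        simp only [f, RingHom.coe_pow, ← Function.iterate_add_apply,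
          Nat.sub_add_sub_cancel hjl hij] }
  let K := DirectLimit (fun _ : ℕ => k) f
  let o : ℕ → (k →+* K) := fun i => DirectLimit.Ring.of (fun _ : ℕ => k) f i
  have ho : ∀ i j, i ≤ j → ∀ x, o j ((σ ^ (j - i)) x) = o i x := fun _ _ h x =>
    DirectLimit.Ring.of_f (G := fun _ : ℕ => k) (f := f) h x
  have hsurj : ∀ z : K, ∃ i x, o i x = z := fun z => by
    induction z using DirectLimit.induction with
    | _ i x => exact ⟨i, x, rfl⟩
  let τ : K →+* K := DirectLimit.Ring.lift (fun _ : ℕ => k) f K (fun i => (o i).comp σ)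
    fun i j h x => by
      rw [RingHom.comp_apply, RingHom.comp_apply, ← ho i j h (σ x)]
      simp only [f, RingHom.coe_pow, ← Function.iterate_succ_apply, Function.iterate_succ_apply']
  have hτ : ∀ i x, τ (o i x) = o i (σ x) := fun i x => DirectLimit.Ring.lift_of ..
  refine ⟨K, inferInstance, o 0, τ, ⟨τ.injective, fun z => ?_⟩, RingHom.ext (hτ 0), fun z => ?_⟩
  · obtain ⟨i, x, rfl⟩ := hsurj z
    refine ⟨o (i + 1) x, (hτ (i + 1) x).trans ?_⟩
    simpa only [Nat.add_sub_cancel_left, pow_one] using ho i (i + 1) i.le_succ x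
  · obtain ⟨i, x, rfl⟩ := hsurj z
    exact ⟨i, x, ((RingHom.congr_fun (pow_comp_of_comp_eq (RingHom.ext (hτ i)) i) x).trans
      (ho 0 i i.zero_le x)).symm⟩

namespace IsPerfection

variable {k K : Type*} [Field k] [Field K] {σ : k →+* k} {ι : k →+* K} {τ : K →+* K}

lemma exists_pow_comp_eq (h : IsPerfection σ ι τ) {κ : Type*} [Finite κ] (x : κ → K) :
    ∃ (n : ℕ) (y : κ → k), ι ∘ y = (τ ^ n) ∘ x := by
  choose N y hy using fun i => h.exists_pow_mem_range (x i)
  obtain ⟨n, hn⟩ := Finite.exists_le N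
  refine ⟨n, fun i => (σ ^ (n - N i)) (y i), funext fun i => ?_⟩
  calc ι ((σ ^ (n - N i)) (y i))
      = (τ ^ (n - N i)) (ι (y i)) := (RingHom.congr_fun (pow_comp_of_comp_eq h.comp_eq _) _).symm
    _ = (τ ^ n) (x i) := by
      rw [hy, RingHom.coe_pow, RingHom.coe_pow, RingHom.coe_pow, ← Function.iterate_add_apply,
        Nat.sub_add_cancel (hn i)]

lemma isMacLane (h : IsPerfection σ ι τ) (hσ : IsMacLane σ) : IsMacLane ι := by
  intro p hp hk m c hc x hx
  obtain ⟨n, y, hy⟩ := h.exists_pow_comp_eq x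
  have hyx : ∀ i, ι (y i) = (τ ^ n) (x i) := congrFun hy
  have hσn : ∀ a, ι ((σ ^ n) a) = (τ ^ n) (ι a) := fun a =>
    (RingHom.congr_fun (pow_comp_of_comp_eq h.comp_eq n) a).symm
  have hy0 : y = 0 := hσ.pow n p hp hk m c hc y <| ι.injective <| calc
    ι (∑ i, y i ^ p * ((σ ^ n) ∘ c) i) = (τ ^ n) (∑ i, x i ^ p * (ι ∘ c) i) := by
      simp only [map_sum, map_mul, map_pow, hyx, hσn, Function.comp_apply]
    _ = ι 0 := by rw [hx, map_zero, map_zero]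
  exact funext fun i => (τ ^ n).injective <| by
    rw [← hyx, hy0, Pi.zero_apply, Pi.zero_apply, map_zero, map_zero]

end IsPerfection

end Perfection

section Completion

variable {T B : Type*} [CommRing T] [CommRing B] {I : Ideal T} {J : Ideal B}

lemma mem_map_pow_iff_evalₐ_eq_zero (hI : I.FG) {n : ℕ} {x : AdicCompletion I T} :
    x ∈ I.map (algebraMap T (AdicCompletion I T)) ^ n ↔ AdicCompletion.evalₐ I n x = 0 := by
  have htop : x ∈ (I ^ n • ⊤ : Submodule T (AdicCompletion I T)) ↔
      x ∈ (I ^ n).map (algebraMap T (AdicCompletion I T)) := by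
    rw [Ideal.smul_top_eq_map]
    rfl
  rw [← Ideal.map_pow, ← htop, AdicCompletion.pow_smul_top_eq_ker_eval hI, LinearMap.mem_ker]
  constructor <;> intro h
  · rw [← AdicCompletion.factor_eval_eq_evalₐ I x (Ideal.mul_top _).le, h, map_zero]
  · rw [← AdicCompletion.factor_evalₐ_eq_eval I x (Ideal.mul_top _).ge, h, map_zero]

lemma evalₐ_algebraMap (n : ℕ) (t : T) :
    AdicCompletion.evalₐ I n (algebraMap T (AdicCompletion I T) t) = Ideal.Quotient.mk (I ^ n) t :=
  (AdicCompletion.evalₐ I n).commutes t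

lemma factorPow_evalₐ {i n : ℕ} (h : i ≤ n) (x : AdicCompletion I T) :
    Ideal.Quotient.factorPow I h (AdicCompletion.evalₐ I n x) = AdicCompletion.evalₐ I i x := by
  induction x using AdicCompletion.induction_on with
  | _ a =>
    rw [AdicCompletion.evalₐ_mk, AdicCompletion.evalₐ_mk, Ideal.Quotient.factor_mk]
    exact AdicCompletion.Ideal.mk_eq_mk I h a

lemma exists_algebraMap_sub_mem_pow (hI : I.FG) (n : ℕ) (x : AdicCompletion I T) :
    ∃ t, algebraMap T (AdicCompletion I T) t - x ∈
      I.map (algebraMap T (AdicCompletion I T)) ^ n := by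
  obtain ⟨t, ht⟩ := Ideal.Quotient.mk_surjective (AdicCompletion.evalₐ I n x)
  exact ⟨t, by rw [mem_map_pow_iff_evalₐ_eq_zero hI, map_sub, evalₐ_algebraMap, ht, sub_self]⟩

lemma bijective_quotientMap_pow_completion (hI : I.FG) (n : ℕ) :
    Function.Bijective (Ideal.quotientMap (I.map (algebraMap T (AdicCompletion I T)) ^ n)
      (algebraMap T (AdicCompletion I T)) (I := I ^ n)
      (by rw [← Ideal.map_pow]; exact Ideal.le_comap_map)) := by
  refine ⟨Ideal.quotientMap_injective' fun t ht => ?_, fun x => ?_⟩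
  · rwa [Ideal.mem_comap, mem_map_pow_iff_evalₐ_eq_zero hI, evalₐ_algebraMap,
      Ideal.Quotient.eq_zero_iff_mem] at ht
  · obtain ⟨x, rfl⟩ := Ideal.Quotient.mk_surjective x
    obtain ⟨t, ht⟩ := exists_algebraMap_sub_mem_pow hI n x
    exact ⟨Ideal.Quotient.mk _ t, Ideal.Quotient.eq.mpr ht⟩

/-- The reduction modulo `J ^ n` of the extension of `f : T → B` to the completion of `T`. -/
noncomputable def completionLiftMod (f : T →+* B) (hf : I.map f ≤ J) (n : ℕ) :
    AdicCompletion I T →+* B ⧸ J ^ n :=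
  (Ideal.quotientMap (J ^ n) f (I := I ^ n) (by
    rw [← Ideal.map_le_iff_le_comap, Ideal.map_pow]; exact Ideal.pow_right_mono hf n)).comp
  (AdicCompletion.evalₐ I n : AdicCompletion I T →+* T ⧸ I ^ n)

lemma completionLiftMod_algebraMap (f : T →+* B) (hf : I.map f ≤ J) (n : ℕ) (t : T) :
    completionLiftMod f hf n (algebraMap T (AdicCompletion I T) t) =
      Ideal.Quotient.mk (J ^ n) (f t) := by
  rw [completionLiftMod, RingHom.comp_apply, RingHom.coe_coe, evalₐ_algebraMap,
    Ideal.quotientMap_mk]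

lemma factorPow_comp_completionLiftMod (f : T →+* B) (hf : I.map f ≤ J) {i n : ℕ} (h : i ≤ n) :
    (Ideal.Quotient.factorPow J h).comp (completionLiftMod f hf n) = completionLiftMod f hf i := by
  ext x
  obtain ⟨t, ht⟩ := Ideal.Quotient.mk_surjective (AdicCompletion.evalₐ I n x)
  simp only [completionLiftMod, RingHom.comp_apply, RingHom.coe_coe, ← factorPow_evalₐ h x, ← ht,
    Ideal.Quotient.factor_mk, Ideal.quotientMap_mk]

/-- The extension of `f : T → B` to the `I`-adic completion of `T`, for `B` complete with respect to
an ideal `J` containing the image of `I`. -/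
noncomputable def completionLift (J : Ideal B) [IsAdicComplete J B] (f : T →+* B)
    (hf : I.map f ≤ J) : AdicCompletion I T →+* B :=
  IsAdicComplete.liftRingHom J (completionLiftMod f hf) (factorPow_comp_completionLiftMod f hf)

lemma completionLift_comp_algebraMap [IsAdicComplete J B] (f : T →+* B) (hf : I.map f ≤ J) :
    (completionLift J f hf).comp (algebraMap T (AdicCompletion I T)) = f :=
  DFunLike.coe_injective <| IsHausdorff.funext' J fun n t =>
    (IsAdicComplete.mk_liftRingHom J _ (factorPow_comp_completionLiftMod f hf) _ _).trans
      (completionLiftMod_algebraMap f hf n t)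

lemma completion_ringHom_ext (hI : I.FG) [IsHausdorff J B] {f g : AdicCompletion I T →+* B}
    (hf : (I.map (algebraMap T (AdicCompletion I T))).map f ≤ J)
    (hg : (I.map (algebraMap T (AdicCompletion I T))).map g ≤ J)
    (h : f.comp (algebraMap T (AdicCompletion I T)) = g.comp (algebraMap T (AdicCompletion I T))) :
    f = g := by
  refine DFunLike.coe_injective <| IsHausdorff.funext' J fun n x => Ideal.Quotient.eq.mpr ?_
  obtain ⟨t, ht⟩ := exists_algebraMap_sub_mem_pow hI n x
  have mem_pow : ∀ F : AdicCompletion I T →+* B,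
      (I.map (algebraMap T (AdicCompletion I T))).map F ≤ J →
      F (algebraMap T (AdicCompletion I T) t - x) ∈ J ^ n := fun F hF =>
    Ideal.pow_right_mono hF n (Ideal.map_pow F _ n ▸ Ideal.mem_map_of_mem F ht)
  have hsub := sub_mem (mem_pow g hg) (mem_pow f hf)
  rwa [map_sub, map_sub, ← RingHom.comp_apply, ← RingHom.comp_apply, h, sub_sub_sub_cancel_left]
    at hsub

/-- The endomorphism of the `I`-adic completion induced by an endomorphism preserving `I`. -/
noncomputable def completionMap (hI : I.FG) (θ : T →+* T) (hθ : I.map θ ≤ I) :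
    AdicCompletion I T →+* AdicCompletion I T :=
  haveI := AdicCompletion.isAdicComplete_self I hI
  completionLift (I.map (algebraMap T (AdicCompletion I T)))
    ((algebraMap T (AdicCompletion I T)).comp θ) (by
      rw [← Ideal.map_map]
      exact Ideal.map_mono hθ)

lemma completionMap_comp_algebraMap (hI : I.FG) {θ : T →+* T} (hθ : I.map θ ≤ I) :
    (completionMap hI θ hθ).comp (algebraMap T (AdicCompletion I T)) =
      (algebraMap T (AdicCompletion I T)).comp θ :=
  haveI := AdicCompletion.isAdicComplete_self I hI
  completionLift_comp_algebraMap _ _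

lemma map_le_ker_of_comp_eq {k : Type*} [CommRing k] {σ : k →+* k} {π : T →+* k} {θ : T →+* T}
    (h : π.comp θ = σ.comp π) : (RingHom.ker π).map θ ≤ RingHom.ker π := by
  rw [Ideal.map_le_iff_le_comap]
  intro a ha
  rw [Ideal.mem_comap, RingHom.mem_ker, ← RingHom.comp_apply, h, RingHom.comp_apply,
    RingHom.mem_ker.mp ha, map_zero]

lemma exists_completion_residue {k : Type*} [Field k] {σ : k →+* k} {π : T →+* k} {θ : T →+* T}
    (hI : I.FG) (hker : RingHom.ker π = I) (hθ : I.map θ ≤ I) (hπθ : π.comp θ = σ.comp π) :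
    ∃ π' : AdicCompletion I T →+* k, π'.comp (algebraMap T (AdicCompletion I T)) = π ∧
      RingHom.ker π' = I.map (algebraMap T (AdicCompletion I T)) ∧
      π'.comp (completionMap hI θ hθ) = σ.comp π' := by
  have hπ : I.map π ≤ ⊥ := (Ideal.map_eq_bot_iff_le_ker π).mpr hker.ge |>.le
  let π' := completionLift ⊥ π hπ
  have hπ' : π'.comp (algebraMap T (AdicCompletion I T)) = π := completionLift_comp_algebraMap π hπ
  have map_bot : ∀ f : AdicCompletion I T →+* k, (f.comp (algebraMap T _) = σ.comp π) →
      (I.map (algebraMap T (AdicCompletion I T))).map f ≤ ⊥ := fun f hf => by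
    rw [Ideal.map_map, hf, ← Ideal.map_map, le_bot_iff.mp hπ, Ideal.map_bot]
  have hcomm : (π'.comp (completionMap hI θ hθ)).comp (algebraMap T _) = σ.comp π := by
    rw [RingHom.comp_assoc, completionMap_comp_algebraMap, ← RingHom.comp_assoc, hπ', hπθ]
  have hσπ' : (σ.comp π').comp (algebraMap T _) = σ.comp π := by rw [RingHom.comp_assoc, hπ']
  have hle : I.map (algebraMap T (AdicCompletion I T)) ≤ RingHom.ker π' := by
    rw [← Ideal.map_eq_bot_iff_le_ker, Ideal.map_map, hπ', le_bot_iff.mp hπ]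
  refine ⟨π', hπ', le_antisymm (fun x hx => ?_) hle, completion_ringHom_ext hI (map_bot _ hcomm)
    (map_bot _ hσπ') (hcomm.trans hσπ'.symm)⟩
  obtain ⟨t, ht⟩ := exists_algebraMap_sub_mem_pow hI 1 x
  rw [pow_one] at ht
  have hπt : π t = 0 := by
    simpa only [RingHom.mem_ker, map_sub, RingHom.mem_ker.mp hx, sub_zero, ← RingHom.comp_apply,
      hπ'] using hle ht
  have htI : t ∈ I := hker ▸ RingHom.mem_ker.mpr hπt
  exact sub_sub_cancel (algebraMap T _ t) x ▸ sub_mem (Ideal.mem_map_of_mem _ htI) ht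

end Completion

section CoefficientField

/-- A coefficient field of `A` along `φ`: a splitting `lift : k → A` of the projection
`residue : A → A ⧸ m = k` which intertwines `φ` with the induced endomorphism `σ` of `k`. -/
structure StableCoefficientField {A k : Type*} [CommRing A] [Field k] (m : Ideal A) (φ : A →+* A)
    (σ : k →+* k) where
  residue : A →+* k
  lift : k →+* A
  ker_residue : RingHom.ker residue = m
  residue_comp_lift : residue.comp lift = RingHom.id k
  residue_comp : residue.comp φ = σ.comp residue
  comp_lift : φ.comp lift = lift.comp σ

section IteratedImage

variable {A : Type*} [CommRing A] {m : Ideal A} {φ : A →+* A}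

lemma map_pow_map_pow (m : Ideal A) (φ : A →+* A) (i j : ℕ) :
    (m.map (φ ^ i)).map (φ ^ j) = m.map (φ ^ (j + i)) := by
  rw [Ideal.map_map, pow_add, RingHom.mul_def]

lemma map_pow_map (m : Ideal A) (φ : A →+* A) (j : ℕ) :
    (m.map (φ ^ j)).map φ = m.map (φ ^ (j + 1)) := by
  simpa only [pow_one, add_comm 1 j] using map_pow_map_pow m φ j 1

lemma antitone_map_pow (h : m.map φ ≤ m) : Antitone fun j => m.map (φ ^ j) :=
  antitone_nat_of_succ_le fun j => by
    simpa only [map_pow_map_pow, pow_one, Ideal.map_map, ← RingHom.mul_def, ← pow_succ] using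
      Ideal.map_mono (f := φ ^ j) h

lemma map_pow_pow_le_succ {c : ℕ} (h : m ^ c ≤ m.map φ) (j : ℕ) :
    m.map (φ ^ j) ^ c ≤ m.map (φ ^ (j + 1)) := by
  simpa only [Ideal.map_pow, Ideal.map_map, ← RingHom.mul_def, ← pow_succ] using
    Ideal.map_mono (f := φ ^ j) h

lemma map_pow_mul_le_pow {N : ℕ} (h : m.map (φ ^ N) ≤ m ^ 2) (j : ℕ) :
    m.map (φ ^ (N * j)) ≤ m ^ (j + 1) := by
  induction j with
  | zero => exact (by simp [RingHom.one_def] : m.map (φ ^ (N * 0)) = m ^ (0 + 1)).le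
  | succ j ih =>
    calc m.map (φ ^ (N * (j + 1)))
        = (m.map (φ ^ (N * j))).map (φ ^ N) := by rw [map_pow_map_pow, mul_add_one, add_comm]
      _ ≤ (m.map (φ ^ N)) ^ (j + 1) := Ideal.map_pow (φ ^ N) m (j + 1) ▸ Ideal.map_mono ih
      _ ≤ (m ^ 2) ^ (j + 1) := Ideal.pow_right_mono h _
      _ ≤ m ^ (j + 1 + 1) := by rw [← pow_mul]; exact Ideal.pow_le_pow_right (by lia)

end IteratedImage

lemma exists_lift_of_formallySmooth {k k' B C : Type*} [CommRing k] [CommRing k'] [CommRing B]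
    [CommRing C] {σ : k →+* k'} (hσ : σ.FormallySmooth) {q : B →+* C} (hq : Function.Surjective q)
    (hn : IsNilpotent (RingHom.ker q)) {g : k →+* B} {s : k' →+* C} (h : s.comp σ = q.comp g) :
    ∃ s' : k' →+* B, q.comp s' = s ∧ s'.comp σ = g := by
  algebraize [σ, g, q.comp g]
  let q' : B →ₐ[k] C := { q with commutes' := fun _ => rfl }
  let s₁ : k' →ₐ[k] C := { s with commutes' := RingHom.congr_fun h }
  let s₂ : k' →ₐ[k] B := Algebra.FormallySmooth.liftOfSurjective s₁ q' hq hn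
  exact ⟨s₂, RingHom.ext (Algebra.FormallySmooth.liftOfSurjective_apply s₁ q' hq hn),
    RingHom.ext s₂.commutes⟩

lemma exists_compatible_lifts {k : Type*} [CommRing k] {σ : k →+* k} (hσ : σ.FormallySmooth)
    {C : ℕ → Type*} [∀ j, CommRing (C j)] {q : ∀ j, C (j + 1) →+* C j} {f : ∀ j, C j →+* C (j + 1)}
    (hq : ∀ j, Function.Surjective (q j)) (hn : ∀ j, IsNilpotent (RingHom.ker (q j)))
    (hqf : ∀ j, (f j).comp (q j) = (q (j + 1)).comp (f (j + 1)))
    {s₀ : k →+* C 0} (h₀ : s₀.comp σ = ((q 0).comp (f 0)).comp s₀) :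
    ∃ s : ∀ j, k →+* C j, s 0 = s₀ ∧ (∀ j, (q j).comp (s (j + 1)) = s j) ∧
      ∀ j, (s (j + 1)).comp σ = (f j).comp (s j) := by
  let P (j : ℕ) (s : k →+* C j) : Prop := s.comp σ = ((q j).comp (f j)).comp s
  have step : ∀ j (s : {s // P j s}), ∃ s' : {s // P (j + 1) s},
      (q j).comp s'.1 = s.1 ∧ s'.1.comp σ = (f j).comp s.1 := fun j ⟨s, hs⟩ => by
    obtain ⟨s', hqs', hs'⟩ := exists_lift_of_formallySmooth hσ (hq j) (hn j)
      (g := (f j).comp s) (hs.trans (RingHom.comp_assoc ..))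
    exact ⟨⟨s', hs'.trans (by rw [← hqs', ← RingHom.comp_assoc, hqf])⟩, hqs', hs'⟩
  choose next hq_next hσ_next using step
  let s : ∀ j, {s // P j s} := Nat.rec ⟨s₀, h₀⟩ next
  exact ⟨fun j => (s j).1, rfl, fun j => hq_next j (s j), fun j => hσ_next j (s j)⟩

lemma exists_ringHom_of_compatible_mod {k A : Type*} [CommRing k] [CommRing A] {m : Ideal A}
    [IsAdicComplete m A] {I : ℕ → Ideal A} (hI : Antitone I) {d : ℕ → ℕ}
    (hd : ∀ n, I (d n) ≤ m ^ n) {s : ∀ j, k →+* A ⧸ I j}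
    (hs : ∀ j, (Ideal.Quotient.factor (hI j.le_succ)).comp (s (j + 1)) = s j) :
    ∃ S : k →+* A, ∀ n j (h : I j ≤ m ^ n),
      (Ideal.Quotient.mk (m ^ n)).comp S = (Ideal.Quotient.factor h).comp (s j) := by
  have factor_comp : ∀ i j (h : i ≤ j), (Ideal.Quotient.factor (hI h)).comp (s j) = s i := by
    intro i j h
    induction j, h using Nat.le_induction with
    | base => ext x; rw [RingHom.comp_apply, Ideal.Quotient.factor_eq, RingHom.id_apply]
    | succ j h ih =>
      rw [← ih, ← hs j, ← RingHom.comp_assoc, Ideal.Quotient.factor_comp]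
  have factor_unique : ∀ n i j (hi : I i ≤ m ^ n) (hj : I j ≤ m ^ n),
      (Ideal.Quotient.factor hi).comp (s i) = (Ideal.Quotient.factor hj).comp (s j) := by
    intro n i j hi hj
    rw [← factor_comp i _ (le_max_left i j), ← factor_comp j _ (le_max_right i j),
      ← RingHom.comp_assoc, ← RingHom.comp_assoc, Ideal.Quotient.factor_comp,
      Ideal.Quotient.factor_comp]
  have compatible : ∀ {i n : ℕ} (h : i ≤ n), (Ideal.Quotient.factorPow m h).comp
      ((Ideal.Quotient.factor (hd n)).comp (s (d n))) =
        (Ideal.Quotient.factor (hd i)).comp (s (d i)) := by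
    intro i n h
    rw [← RingHom.comp_assoc, Ideal.Quotient.factor_comp]
    exact factor_unique i _ _ _ _
  exact ⟨IsAdicComplete.liftRingHom m _ compatible, fun n j h =>
    (IsAdicComplete.mk_comp_liftRingHom m _ compatible n).trans (factor_unique n _ _ _ _)⟩

section Existence

variable {A k : Type*} [CommRing A] [Field k] {m : Ideal A} {φ : A →+* A} {σ : k →+* k}
  {π : A →+* k}

/-- The map `A ⧸ φʲ(m)A → A ⧸ φʲ⁺¹(m)A` induced by `φ`. -/
def mapPowQuotient (m : Ideal A) (φ : A →+* A) (j : ℕ) :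
    A ⧸ m.map (φ ^ j) →+* A ⧸ m.map (φ ^ (j + 1)) :=
  Ideal.quotientMap _ φ (Ideal.map_le_iff_le_comap.mp (map_pow_map m φ j).le)

lemma mapPowQuotient_comp_mk (j : ℕ) : (mapPowQuotient m φ j).comp (Ideal.Quotient.mk _) =
    (Ideal.Quotient.mk _).comp φ :=
  Ideal.quotientMap_comp_mk _

lemma exists_compatible_sections (hπ : Function.Surjective π) (hker : RingHom.ker π = m)
    (hπφ : π.comp φ = σ.comp π) (hσ : σ.FormallySmooth) {c : ℕ} (hc : m ^ c ≤ m.map φ) :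
    ∃ s : ∀ j, k →+* A ⧸ m.map (φ ^ j),
      (s 0).comp π = Ideal.Quotient.mk _ ∧
      (∀ j, (Ideal.Quotient.factor (antitone_map_pow (hker ▸ map_le_ker_of_comp_eq hπφ)
        j.le_succ)).comp (s (j + 1)) = s j) ∧
      ∀ j, (s (j + 1)).comp σ = (mapPowQuotient m φ j).comp (s j) := by
  have hanti := antitone_map_pow (hker ▸ map_le_ker_of_comp_eq hπφ)
  let q (j : ℕ) := Ideal.Quotient.factor (hanti j.le_succ)
  have hq_mk : ∀ j, (q j).comp (Ideal.Quotient.mk _) = Ideal.Quotient.mk _ := fun j =>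
    Ideal.Quotient.factor_comp_mk _
  have hq_nilpotent : ∀ j, IsNilpotent (RingHom.ker (q j)) := fun j => ⟨c, by
    rw [Ideal.Quotient.factor_ker, ← Ideal.map_pow, Ideal.zero_eq_bot, Ideal.map_eq_bot_iff_le_ker,
      Ideal.mk_ker]
    exact map_pow_pow_le_succ hc j⟩
  have hq_comm : ∀ j, (mapPowQuotient m φ j).comp (q j) =
      (q (j + 1)).comp (mapPowQuotient m φ (j + 1)) := fun j => Ideal.Quotient.ringHom_ext <| by
    rw [RingHom.comp_assoc, hq_mk, RingHom.comp_assoc, mapPowQuotient_comp_mk,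
      mapPowQuotient_comp_mk, ← RingHom.comp_assoc, hq_mk]
  have hker₀ : m.map (φ ^ 0) = RingHom.ker π := by rw [pow_zero, hker]; exact Ideal.map_id m
  let e := (Ideal.quotEquivOfEq hker₀).trans (RingHom.quotientKerEquivOfSurjective hπ)
  have he : ∀ a, e.symm (π a) = Ideal.Quotient.mk _ a := fun a =>
    e.symm_apply_apply (Ideal.Quotient.mk _ a)
  have he_comm : (e.symm : k →+* _).comp σ =
      ((q 0).comp (mapPowQuotient m φ 0)).comp (e.symm : k →+* _) := by
    ext x
    obtain ⟨a, rfl⟩ := hπ x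
    calc e.symm (σ (π a)) = Ideal.Quotient.mk _ (φ a) := by
          rw [← RingHom.comp_apply, ← hπφ, RingHom.comp_apply, he]
      _ = q 0 (mapPowQuotient m φ 0 (e.symm (π a))) := by rw [he]; rfl
  obtain ⟨s, hs₀, hs⟩ := exists_compatible_lifts hσ
    (fun j => Ideal.Quotient.factor_surjective (hanti j.le_succ)) hq_nilpotent hq_comm he_comm
  exact ⟨s, by rw [hs₀]; exact RingHom.ext he, hs⟩

lemma comp_eq_comp_of_compatible_mod [IsHausdorff m A] (hφ : m.map φ ≤ m) {d : ℕ → ℕ}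
    (hd : ∀ n, m.map (φ ^ d n) ≤ m ^ n) {s : ∀ j, k →+* A ⧸ m.map (φ ^ j)} {S : k →+* A}
    (hS : ∀ n j (h : m.map (φ ^ j) ≤ m ^ n),
      (Ideal.Quotient.mk (m ^ n)).comp S = (Ideal.Quotient.factor h).comp (s j))
    (hsσ : ∀ j, (s (j + 1)).comp σ = (mapPowQuotient m φ j).comp (s j)) :
    φ.comp S = S.comp σ := by
  refine DFunLike.coe_injective <| IsHausdorff.funext' m fun n => RingHom.congr_fun
    (f := (Ideal.Quotient.mk (m ^ n)).comp (φ.comp S))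
    (g := (Ideal.Quotient.mk (m ^ n)).comp (S.comp σ)) ?_
  have hφn : m ^ n ≤ (m ^ n).comap φ := by
    rw [← Ideal.map_le_iff_le_comap, Ideal.map_pow]
    exact Ideal.pow_right_mono hφ n
  have hd' := (antitone_map_pow hφ (d n).le_succ).trans (hd n)
  have hcomm : (Ideal.quotientMap (m ^ n) φ hφn).comp (Ideal.Quotient.factor (hd n)) =
      (Ideal.Quotient.factor hd').comp (mapPowQuotient m φ (d n)) :=
    Ideal.Quotient.ringHom_ext rfl
  calc (Ideal.Quotient.mk (m ^ n)).comp (φ.comp S)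
      = ((Ideal.quotientMap (m ^ n) φ hφn).comp (Ideal.Quotient.factor (hd n))).comp
          (s (d n)) := by
        rw [← RingHom.comp_assoc, ← Ideal.quotientMap_comp_mk hφn, RingHom.comp_assoc,
          hS n _ (hd n), RingHom.comp_assoc]
    _ = (Ideal.Quotient.factor hd').comp ((s (d n + 1)).comp σ) := by
        rw [hcomm, RingHom.comp_assoc, hsσ]
    _ = (Ideal.Quotient.mk (m ^ n)).comp (S.comp σ) := by
        rw [← RingHom.comp_assoc, ← hS n _ hd', RingHom.comp_assoc]

theorem exists_stableCoefficientField [IsAdicComplete m A] (hπ : Function.Surjective π)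
    (hker : RingHom.ker π = m) (hπφ : π.comp φ = σ.comp π) (hσ : σ.FormallySmooth) {N c : ℕ}
    (hN : m.map (φ ^ N) ≤ m ^ 2) (hc : m ^ c ≤ m.map φ) :
    ∃ C : StableCoefficientField m φ σ, C.residue = π := by
  have hφ := hker ▸ map_le_ker_of_comp_eq hπφ
  have hanti := antitone_map_pow hφ
  have hd : ∀ n, m.map (φ ^ (N * n)) ≤ m ^ n := fun n =>
    (map_pow_mul_le_pow hN n).trans (Ideal.pow_le_pow_right n.le_succ)
  obtain ⟨s, hs₀, hs, hsσ⟩ := exists_compatible_sections hπ hker hπφ hσ hc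
  obtain ⟨S, hS⟩ := exists_ringHom_of_compatible_mod hanti hd hs
  have hπS : π.comp S = RingHom.id k := by
    ext x
    obtain ⟨a, rfl⟩ := hπ x
    have h₀ : m.map (φ ^ 0) ≤ m ^ 1 := map_pow_mul_le_pow hN 0
    have hmod : Ideal.Quotient.mk (m ^ 1) (S (π a)) = Ideal.Quotient.mk (m ^ 1) a :=
      (RingHom.congr_fun (hS 1 0 h₀) (π a)).trans <|
        congrArg (Ideal.Quotient.factor h₀) (RingHom.congr_fun hs₀ a)
    rw [Ideal.Quotient.eq, pow_one, ← hker, RingHom.mem_ker, map_sub, sub_eq_zero] at hmod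
    exact hmod
  exact ⟨⟨π, S, hker, hπS, hπφ, comp_eq_comp_of_compatible_mod hφ hd hS hsσ⟩, rfl⟩

end Existence

end CoefficientField

namespace StableCoefficientField

variable {A : Type v} {k : Type*} [CommRing A] [Field k] {m : Ideal A} {φ : A →+* A} {σ : k →+* k}

lemma map_le (C : StableCoefficientField m φ σ) : m.map φ ≤ m :=
  C.ker_residue ▸ map_le_ker_of_comp_eq C.residue_comp

lemma residue_lift (C : StableCoefficientField m φ σ) (x : k) : C.residue (C.lift x) = x :=
  RingHom.congr_fun C.residue_comp_lift x

lemma residue_surjective (C : StableCoefficientField m φ σ) : Function.Surjective C.residue :=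
  fun x => ⟨C.lift x, C.residue_lift x⟩

lemma sub_mem_iff (C : StableCoefficientField m φ σ) {a b : A} :
    a - b ∈ m ↔ C.residue a = C.residue b := by
  rw [← sub_eq_zero, ← map_sub, ← RingHom.mem_ker, C.ker_residue]

lemma isMaximal (C : StableCoefficientField m φ σ) : m.IsMaximal :=
  C.ker_residue ▸ RingHom.ker_isMaximal_of_surjective C.residue C.residue_surjective

lemma exists_completion (C : StableCoefficientField m φ σ) (hm : m.FG) :
    ∃ D : StableCoefficientField (m.map (algebraMap A (AdicCompletion m A)))
      (completionMap hm φ C.map_le) σ, D.residue.comp (algebraMap A _) = C.residue := by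
  obtain ⟨π, hπ, hker, hπφ⟩ := exists_completion_residue hm C.ker_residue C.map_le C.residue_comp
  refine ⟨⟨π, (algebraMap A _).comp C.lift, hker, ?_, hπφ, ?_⟩, hπ⟩
  · rw [← RingHom.comp_assoc, hπ, C.residue_comp_lift]
  · rw [← RingHom.comp_assoc, completionMap_comp_algebraMap, RingHom.comp_assoc, C.comp_lift,
      RingHom.comp_assoc]

open TensorProduct in
lemma exists_baseChange (C : StableCoefficientField m φ σ) {K : Type w} [Field K] {ι : k →+* K}
    {τ : K →+* K} (h : τ.comp ι = ι.comp σ) :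
    ∃ (T : Type (max v w)) (_ : CommRing T) (j : A →+* T) (θ : T →+* T)
      (D : StableCoefficientField (m.map j) θ τ),
      j.Flat ∧ θ.comp j = j.comp φ ∧ D.residue.comp j = ι.comp C.residue := by
  let := C.lift.toAlgebra
  let := ι.toAlgebra
  let jA : A →+* A ⊗[k] K := Algebra.TensorProduct.includeLeftRingHom
  let jK : K →+* A ⊗[k] K := Algebra.TensorProduct.includeRight.toRingHom
  let θ : A ⊗[k] K →+* A ⊗[k] K := Algebra.TensorProduct.mapRingHom σ φ τ C.comp_lift h
  have hθA : θ.comp jA = jA.comp φ :=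
    Algebra.TensorProduct.mapRingHom_comp_includeLeftRingHom σ φ τ C.comp_lift h
  have hθK : θ.comp jK = jK.comp τ :=
    Algebra.TensorProduct.mapRingHom_comp_includeRight σ φ τ C.comp_lift h
  let π : A →ₐ[k] k := { C.residue with commutes' := C.residue_lift }
  let ε : A ⊗[k] K →ₐ[k] K :=
    (Algebra.TensorProduct.lid k K).toAlgHom.comp (Algebra.TensorProduct.map π (AlgHom.id k K))
  have hεA : ε.toRingHom.comp jA = ι.comp C.residue := RingHom.ext fun a => mul_one (ι (π a))
  have hεK : ε.toRingHom.comp jK = RingHom.id K := RingHom.ext fun x => by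
    simp [ε, jK]
  have hker : RingHom.ker ε.toRingHom = m.map jA := calc
    _ = RingHom.ker (Algebra.TensorProduct.map π (AlgHom.id k K)) := by
      ext t
      simp only [RingHom.mem_ker]
      exact (Algebra.TensorProduct.lid k K).map_eq_zero_iff
    _ = m.map jA := by
      rw [Algebra.TensorProduct.rTensor_ker π C.residue_surjective, ← C.ker_residue]
      rfl
  refine ⟨A ⊗[k] K, inferInstance, jA, θ, ⟨ε, jK, hker, hεK, ?_, hθK⟩, ?_, hθA, hεA⟩
  · refine Algebra.TensorProduct.ringHom_ext ?_ ?_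
    · calc (ε.toRingHom.comp θ).comp jA = ι.comp (C.residue.comp φ) := by
            rw [RingHom.comp_assoc, hθA, ← RingHom.comp_assoc, hεA, RingHom.comp_assoc]
        _ = (τ.comp ε.toRingHom).comp jA := by
            rw [C.residue_comp, RingHom.comp_assoc, hεA, ← RingHom.comp_assoc, ← h,
              RingHom.comp_assoc]
    · calc (ε.toRingHom.comp θ).comp jK = τ := by
            rw [RingHom.comp_assoc, hθK, ← RingHom.comp_assoc, hεK, RingHom.id_comp]
        _ = (τ.comp ε.toRingHom).comp jK := by rw [RingHom.comp_assoc, hεK, RingHom.comp_id]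
  · exact RingHom.flat_algebraMap_iff.mpr inferInstance

end StableCoefficientField

section CompleteFinite

variable {A : Type*} [CommRing A]

lemma mem_smul_top_pi {κ : Type*} [Finite κ] (I : Ideal A) (x : κ → A) :
    x ∈ (I • ⊤ : Submodule A (κ → A)) ↔ ∀ i, x i ∈ I := by
  classical
  have := Fintype.ofFinite κ
  refine ⟨fun h i => ?_, fun h => ?_⟩
  · exact Submodule.smul_induction_on h (fun a ha y _ => I.mul_mem_right (y i) ha)
      fun y z hy hz => I.add_mem hy hz
  · rw [pi_eq_sum_univ x]
    exact sum_mem fun i _ => Submodule.smul_mem_smul (h i) trivial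

lemma isPrecomplete_pi {κ : Type*} [Finite κ] (I : Ideal A) [IsPrecomplete I A] :
    IsPrecomplete I (κ → A) := by
  refine ⟨fun f hf => ?_⟩
  simp only [SModEq.sub_mem, mem_smul_top_pi] at hf
  have hlim : ∀ i, ∃ L : A, ∀ n, f n i ≡ L [SMOD (I ^ n • ⊤ : Submodule A A)] := fun i =>
    IsPrecomplete.prec ‹_› fun h => by
      rw [SModEq.sub_mem, smul_eq_mul, Ideal.mul_top]
      exact hf h i
  choose L hL using hlim
  refine ⟨L, fun n => ?_⟩
  simp only [SModEq.sub_mem, smul_eq_mul, Ideal.mul_top] at hL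
  rw [SModEq.sub_mem, mem_smul_top_pi]
  exact fun i => hL i n

lemma finite_of_fg_sup_smul_top_eq_top {M : Type*} [AddCommGroup M] [Module A M] {I : Ideal A}
    [IsPrecomplete I A] [IsHausdorff I M] {N : Submodule A M} (hN : N.FG)
    (h : N ⊔ I • ⊤ = ⊤) : Module.Finite A M := by
  obtain ⟨n, f, rfl⟩ := N.fg_iff_exists_fin_linearMap.mp hN
  have := isPrecomplete_pi (κ := Fin n) I
  refine .of_surjective f (surjective_of_mkQ_comp_surjective (I := I) ?_)
  rw [← LinearMap.range_eq_top, LinearMap.range_comp, Submodule.map_mkQ_eq_top, sup_comm, h]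

lemma span_le_span_mul_top {B : Type*} [CommRing B] [Algebra A B] (G : Set B) :
    (Ideal.span G).restrictScalars A ≤ Submodule.span A G * ⊤ := by
  intro x hx
  induction hx using Submodule.span_induction with
  | mem x hx =>
    exact mul_one x ▸ Submodule.mul_mem_mul (Submodule.subset_span hx) Submodule.mem_top
  | zero => exact zero_mem _
  | add x y _ _ hx hy => exact add_mem hx hy
  | smul b x _ hx =>
    rw [smul_eq_mul, mul_comm b]
    have hmul := Submodule.mul_mem_mul hx (Submodule.mem_top (R := A) (x := b))
    rw [mul_assoc] at hmul
    exact mul_le_mul_right le_top (Submodule.span A G) hmul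

lemma exists_fg_sup_pow_eq_top {B : Type*} [CommRing B] [Algebra A B] {J : Ideal B} (hJ : J.FG)
    {N : Submodule A B} (hN : N.FG) (h : N ⊔ J.restrictScalars A = ⊤) (n : ℕ) :
    ∃ M : Submodule A B, M.FG ∧ M ⊔ (J ^ n).restrictScalars A = ⊤ := by
  induction n with
  | zero => exact ⟨⊥, Submodule.fg_bot, by
      rw [pow_zero, Ideal.one_eq_top, Submodule.restrictScalars_top, sup_top_eq]⟩
  | succ n ih =>
    obtain ⟨M, hM, hMJ⟩ := ih
    obtain ⟨G, hG⟩ := hJ.pow (n := n)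
    let P : Submodule A B := Submodule.span A (G : Set B)
    have hPJ : P * J.restrictScalars A ≤ (J ^ (n + 1)).restrictScalars A := by
      rw [Submodule.mul_le]
      exact fun p hp x hx => pow_succ J n ▸ Ideal.mul_mem_mul
        (hG ▸ Submodule.span_le_restrictScalars A B (G : Set B) hp) hx
    refine ⟨M ⊔ P * N, hM.sup ((Submodule.fg_span G.finite_toSet).mul hN), top_le_iff.mp ?_⟩
    calc ⊤ = M ⊔ (J ^ n).restrictScalars A := hMJ.symm
      _ ≤ M ⊔ P * (N ⊔ J.restrictScalars A) := by
        rw [h, ← hG]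
        exact sup_le_sup_left (span_le_span_mul_top _) M
      _ = (M ⊔ P * N) ⊔ P * J.restrictScalars A := by rw [Submodule.mul_sup, sup_assoc]
      _ ≤ (M ⊔ P * N) ⊔ (J ^ (n + 1)).restrictScalars A := sup_le_sup_left hPJ _

lemma finite_of_pow_le_map {B : Type*} [CommRing B] {I : Ideal A} {J : Ideal B}
    [IsPrecomplete I A] [IsHausdorff J B] {f : A →+* B} (hJ : J.FG) (hf : I.map f ≤ J) {c : ℕ}
    (hc : J ^ c ≤ I.map f) (hsurj : Function.Surjective ((Ideal.Quotient.mk J).comp f)) :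
    f.Finite := by
  algebraize [f]
  have : IsHausdorff I B := .of_map hf
  have hone : (1 : Submodule A B) ⊔ J.restrictScalars A = ⊤ := by
    refine top_le_iff.mp fun b _ => ?_
    obtain ⟨a, ha⟩ := hsurj (Ideal.Quotient.mk J b)
    rw [← add_sub_cancel (f a) b]
    exact Submodule.add_mem_sup ⟨a, mul_one _⟩ (Ideal.Quotient.eq.mp ha.symm)
  have hone_fg : (1 : Submodule A B).FG :=
    Submodule.one_eq_span (R := A) (A := B) ▸ Submodule.fg_span_singleton 1
  obtain ⟨M, hM, hMJ⟩ := exists_fg_sup_pow_eq_top hJ hone_fg hone c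
  refine finite_of_fg_sup_smul_top_eq_top hM (I := I) (top_le_iff.mp ?_)
  exact hMJ.ge.trans (sup_le_sup_left (by rw [Ideal.smul_top_eq_map]; exact hc) M)

lemma isNoetherianRing_of_isAdicComplete {K : Type*} [CommRing K] [IsNoetherianRing K] {I : Ideal A}
    [IsAdicComplete I A] (hI : I.FG) {j : K →+* A}
    (hj : Function.Surjective ((Ideal.Quotient.mk I).comp j)) : IsNoetherianRing A := by
  obtain ⟨G, rfl⟩ := hI
  let I₀ := MvPolynomial.idealOfVars G K
  let P := AdicCompletion I₀ (MvPolynomial G K)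
  have hI₀ : I₀.FG := MvPolynomial.idealOfVars_fg G K
  let f : MvPolynomial G K →+* A := MvPolynomial.eval₂Hom j Subtype.val
  have hf : I₀.map f = Ideal.span (G : Set A) := by
    simp only [I₀, MvPolynomial.idealOfVars, Ideal.map_span, ← Set.range_comp]
    congr
    ext x
    simp [f]
  let g : P →+* A := completionLift (Ideal.span (G : Set A)) f hf.le
  have hgf : g.comp (algebraMap _ P) = f := completionLift_comp_algebraMap f hf.le
  have hg : (I₀.map (algebraMap _ P)).map g = Ideal.span (G : Set A) := by
    rw [Ideal.map_map, hgf, hf]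
  have : IsNoetherianRing P := isNoetherianRing_of_ringEquiv (MvPowerSeries G K)
    (MvPowerSeries.toAdicCompletionAlgEquiv G K).toRingEquiv
  have : IsAdicComplete (I₀.map (algebraMap _ P)) P := AdicCompletion.isAdicComplete_self I₀ hI₀
  have : IsHausdorff ((I₀.map (algebraMap _ P)).map g) A := hg ▸ inferInstance
  refine isNoetherianRing_of_surjective P A g
    (surjective_of_mk_map_comp_surjective g (I := I₀.map (algebraMap _ P)) fun b => ?_)
  obtain ⟨x, hx⟩ := hj (Ideal.quotEquivOfEq hg b)
  refine ⟨algebraMap (MvPolynomial G K) P (MvPolynomial.C x), (Ideal.quotEquivOfEq hg).injective ?_⟩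
  rw [← hx]
  exact congrArg (Ideal.Quotient.mk _) <|
    (RingHom.congr_fun hgf (MvPolynomial.C x)).trans (MvPolynomial.eval₂Hom_C ..)

end CompleteFinite

section CompletionFlat

variable {A S κ : Type*} [CommRing A] [CommRing S] [Fintype κ]

lemma exists_mem_pow_smul_top_map_eq {M N : Type*} [AddCommGroup M] [Module A M] [AddCommGroup N]
    [Module A N] [IsNoetherianRing A] [Module.Finite A N] (I : Ideal A) (F : M →ₗ[A] N) :
    ∃ c, ∀ j a, F a ∈ (I ^ (j + c) • ⊤ : Submodule A N) →
      ∃ e ∈ (I ^ j • ⊤ : Submodule A M), F e = F a := by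
  obtain ⟨c, hc⟩ := Ideal.exists_pow_inf_eq_pow_smul I (LinearMap.range F)
  refine ⟨c, fun j a ha => ?_⟩
  have hmem : F a ∈ I ^ (j + c) • (⊤ : Submodule A N) ⊓ LinearMap.range F := ⟨ha, a, rfl⟩
  rw [hc (j + c) (Nat.le_add_left c j), Nat.add_sub_cancel] at hmem
  have hrange := Submodule.smul_mono (le_refl (I ^ j)) inf_le_right hmem
  rwa [LinearMap.range_eq_map, ← Submodule.map_smul''] at hrange

lemma mem_of_forall_mem_sup_pow_smul_top {M : Type*} [AddCommGroup M] [Module A M]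
    [IsNoetherianRing A] [Module.Finite A M] {I : Ideal A} (hI : I ≤ Ideal.jacobson ⊥)
    {Q : Submodule A M} {x : M} (hx : ∀ j, x ∈ Q ⊔ I ^ j • ⊤) : x ∈ Q := by
  rw [← Submodule.Quotient.mk_eq_zero]
  have : IsHausdorff I (M ⧸ Q) := IsHausdorff.of_le_jacobson _ _ hI
  refine IsHausdorff.haus this _ fun j => ?_
  have hmk := Submodule.mem_map_of_mem (f := Q.mkQ) (hx j)
  rw [Submodule.map_sup, Q.mkQ_map_self, bot_sup_eq, Submodule.map_smul''] at hmk
  exact SModEq.zero.mpr (Submodule.smul_mono le_rfl le_top hmk)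

/-- The `S`-linear span, in `κ → S`, of the syzygies over `A` of a family `f` of elements of `A`;
these are the trivial relations among the `f i` with coefficients in `S`. -/
def syzygySpan (S : Type*) [CommRing S] [Algebra A S] (f : κ → A) : Submodule S (κ → S) :=
  Submodule.span S ((fun (a : κ → A) i => algebraMap A S (a i)) '' {a : κ → A | ∑ i, f i * a i = 0})

lemma isTrivialRelation_of_mem_syzygySpan [Algebra A S] {f : κ → A} {x : κ → S}
    (hx : x ∈ syzygySpan S f) : Module.IsTrivialRelation f x := by
  obtain ⟨s, hs, y, rfl⟩ := (Submodule.mem_span_image_iff_exists_fun S).mp hx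
  refine ⟨s.card, fun i q => (s.equivFin.symm q).1 i, fun q => y (s.equivFin.symm q), fun i => ?_,
    fun q => hs (s.equivFin.symm q).2⟩
  rw [Finset.sum_apply, ← s.equivFin.symm.sum_comp]
  exact Finset.sum_congr rfl fun q _ => by
    rw [Pi.smul_apply, smul_eq_mul, mul_comm, Algebra.smul_def]

lemma exists_eq_sum_of_flat {g : A →+* S} (hg : g.Flat) {f : κ → A} {x : κ → S}
    (hx : ∑ i, g (f i) * x i = 0) :
    ∃ (l : ℕ) (a : Fin l → κ → A) (y : Fin l → S),
      (∀ i, x i = ∑ q, y q * g (a q i)) ∧ ∀ q, ∑ i, f i * a q i = 0 := by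
  algebraize [g]
  obtain ⟨l, a, y, hxy, hfa⟩ := Module.Flat.isTrivialRelation_of_sum_smul_eq_zero (f := f) (x := x)
    (by simp only [Algebra.smul_def]; exact hx)
  refine ⟨l, fun q i => a i q, y, fun i => ?_, hfa⟩
  rw [hxy i]
  exact Finset.sum_congr rfl fun q _ => by rw [Algebra.smul_def, mul_comm]; rfl

lemma exists_sub_sum_mem_of_flat_quotientMap {g : A →+* S} {I : Ideal A} {J : Ideal S}
    (h : I ≤ J.comap g) (hflat : (Ideal.quotientMap J g h).Flat) {f : κ → A} {x : κ → S}
    (hx : ∑ i, g (f i) * x i = 0) :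
    ∃ (l : ℕ) (a : Fin l → κ → A) (y : Fin l → S),
      (∀ i, x i - ∑ q, y q * g (a q i) ∈ J) ∧ ∀ q, ∑ i, f i * a q i ∈ I := by
  obtain ⟨l, a, y, hxy, hfa⟩ := exists_eq_sum_of_flat hflat
    (f := fun i => Ideal.Quotient.mk I (f i)) (x := fun i => Ideal.Quotient.mk J (x i)) (by
      simp only [Ideal.quotientMap_mk, ← map_mul, ← map_sum, hx, map_zero])
  choose a' ha' using fun q i => Ideal.Quotient.mk_surjective (a q i)
  choose y' hy' using fun q => Ideal.Quotient.mk_surjective (y q)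
  refine ⟨l, a', y', fun i => Ideal.Quotient.eq.mp ?_, fun q => ?_⟩
  · simp only [hxy i, map_sum, map_mul, hy', ← ha', Ideal.quotientMap_mk]
  · simp only [← Ideal.Quotient.eq_zero_iff_mem, map_sum, map_mul, ha', hfa q]

/-- By Artin–Rees, a relation that holds modulo a high power of `I` is a syzygy up to an error in a
smaller power. -/
lemma exists_forall_mem_syzygySpan_sup_pow [Algebra A S] [IsNoetherianRing A] {I : Ideal A}
    {J : Ideal S} (hIJ : I.map (algebraMap A S) ≤ J) (f : κ → A) :
    ∃ c, ∀ (j : ℕ) (x : κ → S) (l : ℕ) (a : Fin l → κ → A) (y : Fin l → S),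
      (∀ i, x i - ∑ q, y q * algebraMap A S (a q i) ∈ J ^ (j + c)) →
      (∀ q, ∑ i, f i * a q i ∈ I ^ (j + c)) → x ∈ syzygySpan S f ⊔ J ^ j • ⊤ := by
  obtain ⟨c, hc⟩ := exists_mem_pow_smul_top_map_eq I
    (∑ i, f i • LinearMap.proj i : (κ → A) →ₗ[A] A)
  simp only [LinearMap.sum_apply, LinearMap.smul_apply, LinearMap.proj_apply, smul_eq_mul,
    Ideal.mul_top, mem_smul_top_pi] at hc
  refine ⟨c, fun j x l a y hxy hfa => ?_⟩
  choose e he hfe using fun q => hc j (a q) (hfa q)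
  let γ : (κ → A) → κ → S := fun a i => algebraMap A S (a i)
  have hx : x = ∑ q, y q • γ (a q - e q) +
      (∑ q, y q • γ (e q) + fun i => x i - ∑ q, y q * algebraMap A S (a q i)) := by
    ext i
    simp only [γ, Pi.add_apply, Finset.sum_apply, Pi.smul_apply, Pi.sub_apply, smul_eq_mul, map_sub,
      mul_sub, Finset.sum_sub_distrib]
    ring
  rw [hx]
  refine Submodule.add_mem_sup (sum_mem fun q _ => Submodule.smul_mem _ _ <|
    Submodule.subset_span ⟨_, ?_, rfl⟩) (add_mem (sum_mem fun q _ => Submodule.smul_mem _ _ ?_) ?_)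
  · simp only [Set.mem_ofPred_eq, Pi.sub_apply, mul_sub, Finset.sum_sub_distrib, hfe, sub_self]
  · exact (mem_smul_top_pi _ _).mpr fun i =>
      Ideal.pow_right_mono hIJ j (Ideal.map_pow (algebraMap A S) I j ▸
        Ideal.mem_map_of_mem _ (he q i))
  · exact (mem_smul_top_pi _ _).mpr fun i => Ideal.pow_le_pow_right (Nat.le_add_right j c) (hxy i)

lemma flat_of_forall_flat_quotientMap_pow [IsNoetherianRing A] [IsNoetherianRing S] {g : A →+* S}
    {I : Ideal A} {J : Ideal S} (hJ : J ≤ Ideal.jacobson ⊥) (hIJ : I.map g ≤ J)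
    (h : ∀ n, I ^ n ≤ (J ^ n).comap g) (hflat : ∀ n, (Ideal.quotientMap (J ^ n) g (h n)).Flat) :
    g.Flat := by
  let := g.toAlgebra
  refine Module.Flat.of_forall_isTrivialRelation fun {l f x} hfx => ?_
  obtain ⟨c, hc⟩ := exists_forall_mem_syzygySpan_sup_pow hIJ f
  refine isTrivialRelation_of_mem_syzygySpan <| mem_of_forall_mem_sup_pow_smul_top hJ fun j => ?_
  simp only [Algebra.smul_def] at hfx
  obtain ⟨l, a, y, hxy, hfa⟩ := exists_sub_sum_mem_of_flat_quotientMap _ (hflat (j + c)) hfx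
  exact hc j x l a y hxy hfa

lemma flat_quotientMap_of_eq_map {T : Type*} [CommRing T] {g : A →+* T} (hg : g.Flat)
    {I : Ideal A} {J : Ideal T} (hJ : J = I.map g) :
    (Ideal.quotientMap J g (Ideal.map_le_iff_le_comap.mp hJ.ge)).Flat := by
  subst hJ
  let := g.toAlgebra
  have : Module.Flat A T := hg
  let e := Algebra.TensorProduct.quotIdealMapEquivQuotTensor T I
  have hflat : (algebraMap (A ⧸ I) (TensorProduct A (A ⧸ I) T)).Flat :=
    RingHom.flat_algebraMap_iff.mpr inferInstance
  convert hflat.comp (.of_bijective (f := (e.symm : _ →+* T ⧸ I.map g)) e.symm.bijective)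
  exact (e.symm.toAlgHom.comp_algebraMap).symm

lemma flat_comp_algebraMap_adicCompletion {T : Type*} [CommRing T] {g : A →+* T} (hg : g.Flat)
    {m : Ideal A} [IsNoetherianRing A] [IsNoetherianRing (AdicCompletion (m.map g) T)] :
    ((algebraMap T (AdicCompletion (m.map g) T)).comp g).Flat := by
  let n := (m.map g).map (algebraMap T (AdicCompletion (m.map g) T))
  have hfg : (m.map g).FG := Ideal.FG.map (IsNoetherian.noetherian m) g
  have : IsAdicComplete n (AdicCompletion (m.map g) T) := AdicCompletion.isAdicComplete_self _ hfg
  have hmn : m.map ((algebraMap T _).comp g) = n := (Ideal.map_map g _).symm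
  refine flat_of_forall_flat_quotientMap_pow (I := m) (J := n) (IsAdicComplete.le_jacobson_bot n)
    hmn.le (fun k => ?_) fun k => ?_
  · rw [← Ideal.map_le_iff_le_comap, Ideal.map_pow, hmn]
  · convert (flat_quotientMap_of_eq_map hg (Ideal.map_pow g m k).symm).comp
      (.of_bijective (bijective_quotientMap_pow_completion hfg k))
    exact Ideal.Quotient.ringHom_ext rfl

end CompletionFlat

namespace StableCoefficientField

variable {A k : Type*} [CommRing A] [Field k] {m : Ideal A} {φ : A →+* A} {σ : k →+* k}

lemma surjective_mk_comp_lift (C : StableCoefficientField m φ σ) :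
    Function.Surjective ((Ideal.Quotient.mk m).comp C.lift) := fun x => by
  obtain ⟨a, rfl⟩ := Ideal.Quotient.mk_surjective x
  exact ⟨C.residue a, Ideal.Quotient.eq.mpr (C.sub_mem_iff.mpr (C.residue_lift _))⟩

lemma isNoetherianRing (C : StableCoefficientField m φ σ) [IsAdicComplete m A] (hm : m.FG) :
    IsNoetherianRing A :=
  isNoetherianRing_of_isAdicComplete hm C.surjective_mk_comp_lift

lemma finite (C : StableCoefficientField m φ σ) [IsAdicComplete m A] (hm : m.FG)
    (hσ : Function.Surjective σ) {c : ℕ} (hc : m ^ c ≤ m.map φ) : φ.Finite := by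
  refine finite_of_pow_le_map hm C.map_le hc fun x => ?_
  obtain ⟨y, rfl⟩ := C.surjective_mk_comp_lift x
  obtain ⟨z, rfl⟩ := hσ y
  exact ⟨C.lift z, congrArg _ (RingHom.congr_fun C.comp_lift z)⟩

lemma isMacLane_residueField_map {R : Type*} [CommRing R] [IsLocalRing R] [IsLocalRing A]
    {β : R →+* A} [IsLocalHom β] {ι : ResidueField R →+* k}
    (C : StableCoefficientField (maximalIdeal A) φ σ)
    (hβ : C.residue.comp β = ι.comp (IsLocalRing.residue R)) (hι : IsMacLane ι) :
    IsMacLane (ResidueField.map β) := by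
  let g : ResidueField A →+* k := Ideal.Quotient.lift _ C.residue fun _ ha =>
    RingHom.mem_ker.mp (C.ker_residue.ge ha)
  refine IsMacLane.of_comp (g := g) ?_
  convert hι
  exact Ideal.Quotient.ringHom_ext hβ

end StableCoefficientField

section CommutingSquare

variable {A B : Type*} [CommRing A] [CommRing B] {I : Ideal A} {f : A →+* B} {φ : A →+* A}
  {ψ : B →+* B}

lemma map_map_of_comp_eq (h : ψ.comp f = f.comp φ) : (I.map f).map ψ = (I.map φ).map f := by
  rw [Ideal.map_map, h, ← Ideal.map_map]

lemma pow_le_map_of_comp_eq (h : ψ.comp f = f.comp φ) {c : ℕ} (hc : I ^ c ≤ I.map φ) :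
    I.map f ^ c ≤ (I.map f).map ψ := by
  rw [map_map_of_comp_eq h, ← Ideal.map_pow]
  exact Ideal.map_mono hc

lemma map_pow_le_of_comp_eq (h : ψ.comp f = f.comp φ) {n : ℕ} (hn : I.map (φ ^ n) ≤ I ^ 2) :
    (I.map f).map (ψ ^ n) ≤ I.map f ^ 2 := by
  rw [map_map_of_comp_eq (pow_comp_of_comp_eq h n), ← Ideal.map_pow]
  exact Ideal.map_mono hn

end CommutingSquare

lemma StableCoefficientField.nonempty_cowsCompletion {R S K : Type u} [CommRing R]
    [IsNoetherianRing R] [IsLocalRing R] [CommRing S] [Field K] {φ : R →+* R} {ψ : S →+* S}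
    {τ : K →+* K} {β : R →+* S} {n : Ideal S} (C : StableCoefficientField n ψ τ)
    [IsAdicComplete n S] (hn : (maximalIdeal R).map β = n) (hflat : β.Flat)
    (hψβ : ψ.comp β = β.comp φ) (hτ : Function.Surjective τ) {ι : ResidueField R →+* K}
    (hι : IsMacLane ι) (hβι : C.residue.comp β = ι.comp (IsLocalRing.residue R)) {N c : ℕ}
    (hN : ∀ i, N ≤ i → (maximalIdeal R).map (φ ^ i) ≤ maximalIdeal R ^ 2)
    (hc : maximalIdeal R ^ c ≤ (maximalIdeal R).map φ) : Nonempty (CowsCompletion R φ) := by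
  have hfg : n.FG := hn ▸ Ideal.FG.map (IsNoetherian.noetherian _) β
  have := C.isMaximal
  have : IsLocalRing S := isLocalRing_of_isAdicComplete_maximal n
  obtain rfl : n = maximalIdeal S := eq_maximalIdeal C.isMaximal
  have hlocal : IsLocalHom β := ((local_hom_TFAE β).out 0 2).mpr hn.le
  refine ⟨{ S := S, noethS := C.isNoetherianRing hfg, β := β, ψ := ψ,
            weaklyEtale := ⟨hflat, hlocal, hn⟩, complete := ‹_›,
            residueSeparable := (C.isMacLane_residueField_map hβι hι).isSeparableFieldHom,
            square_comm := hψβ,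
            moduleFinite := C.finite hfg hτ (hn ▸ pow_le_map_of_comp_eq hψβ hc),
            contracting := ⟨N, fun i hi x hx => ?_⟩ }⟩
  exact (hn ▸ map_pow_le_of_comp_eq hψβ (hN i hi)) (Ideal.mem_map_of_mem _ hx)

lemma exists_stableCoefficientField_adicCompletion {R : Type u} [CommRing R] [IsNoetherianRing R]
    [IsLocalRing R] (φ : R →+* R) [IsLocalHom φ] (hsep : (ResidueField.map φ).IsSeparableFieldHom)
    {N c : ℕ} (hN : (maximalIdeal R).map (φ ^ N) ≤ maximalIdeal R ^ 2)
    (hc : maximalIdeal R ^ c ≤ (maximalIdeal R).map φ) :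
    ∃ (φ' : AdicCompletion (maximalIdeal R) R →+* AdicCompletion (maximalIdeal R) R)
      (C : StableCoefficientField
        ((maximalIdeal R).map (algebraMap R (AdicCompletion (maximalIdeal R) R))) φ'
        (ResidueField.map φ)),
      φ'.comp (algebraMap R _) = (algebraMap R _).comp φ ∧
        C.residue.comp (algebraMap R _) = residue R := by
  have hm : (maximalIdeal R).FG := IsNoetherian.noetherian _
  have hφ : (maximalIdeal R).map φ ≤ maximalIdeal R :=
    ((local_hom_TFAE φ).out 0 2).mp ‹IsLocalHom φ›
  obtain ⟨π, hπ, hker, hπφ⟩ := exists_completion_residue hm (ker_residue (R := R)) hφ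
    (σ := ResidueField.map φ) (RingHom.ext fun r => (ResidueField.map_residue φ r).symm)
  have hcomp := completionMap_comp_algebraMap hm hφ
  have := AdicCompletion.isAdicComplete_self (maximalIdeal R) hm
  have hπsurj : Function.Surjective π := .of_comp (g := algebraMap R _) <| by
    rw [← RingHom.coe_comp, hπ]
    exact residue_surjective
  obtain ⟨C, rfl⟩ := exists_stableCoefficientField hπsurj hker hπφ
    (formallySmooth_of_isSeparableFieldHom hsep) (map_pow_le_of_comp_eq hcomp hN)
    (pow_le_map_of_comp_eq hcomp hc)
  exact ⟨_, C, hcomp, hπ⟩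

lemma StableCoefficientField.exists_complete_flat_extension {A : Type v} {k : Type*} [CommRing A]
    [Field k] [IsNoetherianRing A] {m : Ideal A} {φ : A →+* A} {σ : k →+* k}
    (C : StableCoefficientField m φ σ) {K : Type w} [Field K] {ι : k →+* K} {τ : K →+* K}
    (h : τ.comp ι = ι.comp σ) :
    ∃ (S : Type (max v w)) (_ : CommRing S) (f : A →+* S) (ψ : S →+* S) (n : Ideal S)
      (D : StableCoefficientField n ψ τ), IsAdicComplete n S ∧ m.map f = n ∧ f.Flat ∧
        ψ.comp f = f.comp φ ∧ D.residue.comp f = ι.comp C.residue := by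
  obtain ⟨T, _, j, θ, E, hj, hθj, hEj⟩ := C.exists_baseChange h
  have hfg : (m.map j).FG := Ideal.FG.map (IsNoetherian.noetherian m) j
  obtain ⟨D, hDE⟩ := E.exists_completion hfg
  have hcomplete := AdicCompletion.isAdicComplete_self (m.map j) hfg
  have := D.isNoetherianRing (Ideal.FG.map hfg _)
  refine ⟨_, _, (algebraMap T _).comp j, _, _, D, hcomplete, (Ideal.map_map j _).symm,
    flat_comp_algebraMap_adicCompletion hj, ?_, ?_⟩
  · rw [← RingHom.comp_assoc, completionMap_comp_algebraMap, RingHom.comp_assoc, hθj,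
      RingHom.comp_assoc]
  · rw [← RingHom.comp_assoc, hDE, hEj]

/-- Let `φ` be a contracting endomorphism of a Noetherian local ring
`(R,m,k)` whose induced endomorphism of `k` is separable and such that `R/φ(m)R` is
Artinian.  Then there is a commutative square consisting of a weakly étale local map
`β̃ : (R,m,k) → (S,mS,K)` with `S` complete and `k → K` separable, and a module-finite
contracting endomorphism `ψ : S → S` with `ψ ∘ β̃ = β̃ ∘ φ`. -/
theorem exists_cows_completion
    {R : Type u} [CommRing R] [IsNoetherianRing R] [IsLocalRing R]
    (φ : R →+* R) [IsLocalHom φ]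
    (hcontr : ∃ N : ℕ, ∀ n : ℕ, N ≤ n → ∀ x ∈ maximalIdeal R,
      (φ ^ n) x ∈ (maximalIdeal R) ^ 2)
    (hsep : (ResidueField.map φ).IsSeparableFieldHom)
    (hart : IsArtinianRing (R ⧸ Ideal.map φ (maximalIdeal R))) :
    Nonempty (CowsCompletion R φ) := by
  obtain ⟨N, hN⟩ := hcontr
  have hcontr' : ∀ n, N ≤ n → (maximalIdeal R).map (φ ^ n) ≤ maximalIdeal R ^ 2 :=
    fun n hn => Ideal.map_le_iff_le_comap.mpr (hN n hn)
  obtain ⟨c, hc⟩ : ∃ c, maximalIdeal R ^ c ≤ (maximalIdeal R).map φ :=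
    exists_maximalIdeal_pow_le_of_isArtinianRing_quotient _
  obtain ⟨φ', C, hφ', hC⟩ :=
    exists_stableCoefficientField_adicCompletion φ hsep (hcontr' N le_rfl) hc
  have := AdicCompletion.isAdicComplete_self (maximalIdeal R) (IsNoetherian.noetherian _)
  have := C.isNoetherianRing (Ideal.FG.map (IsNoetherian.noetherian _) _)
  obtain ⟨K, _, ι, τ, hK⟩ := exists_isPerfection (ResidueField.map φ)
  obtain ⟨S, _, f, ψ, n, D, hS, hn, hf, hψ, hD⟩ := C.exists_complete_flat_extension hK.comp_eq
  have hflat : (algebraMap R (AdicCompletion (maximalIdeal R) R)).Flat :=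
    RingHom.flat_algebraMap_iff.mpr (AdicCompletion.flat_of_isNoetherian _)
  refine D.nonempty_cowsCompletion (β := f.comp (algebraMap R _)) (by rw [← Ideal.map_map, hn])
    (hflat.comp hf) ?_ hK.bijective.2 (hK.isMacLane (.of_isSeparableFieldHom hsep)) ?_ hcontr' hc
  · rw [← RingHom.comp_assoc, hψ, RingHom.comp_assoc, hφ', RingHom.comp_assoc]
  · rw [← RingHom.comp_assoc, hD, RingHom.comp_assoc, hC]
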